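/- The Grone–Merris conjecture holds for G if and only if it holds for its complement Ḡ: λ(G) ⊴ d^T(G) implies and is implied by λ(Ḡ) ⊴ d^T(Ḡ). -/

import Mathlib

def Majorizes {I K : Type*} [Fintype I] [Fintype K] (y : I → ℝ) (x : K → ℝ) : Prop :=
  (∀ A : Finset K, ∃ B : Finset I, B.card = A.card ∧ ∑ i ∈ A, x i ≤ ∑ i ∈ B, y i) ∧
  (∑ i, x i) = (∑ i, y i)

/-- Majorization `X ⊴ Y` of multisets of real numbers. -/
def Multiset.Majorizes (Y X : Multiset ℝ) : Prop :=
  (∀ A ≤ X, ∃ B ≤ Y, B.card = A.card ∧ A.sum ≤ B.sum) ∧ X.sum = Y.sum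

theorem Multiset.exists_le_map_eq {α β : Type*} (f : α → β) (s : Multiset α) :
    ∀ A ≤ s.map f, ∃ t ≤ s, t.map f = A := by
  induction s using Multiset.induction_on with
  | empty =>
    intro A hA
    exact ⟨0, le_rfl, by simpa [eq_comm] using hA⟩
  | cons a s ih =>
    intro A hA
    rw [Multiset.map_cons] at hA
    by_cases ha : f a ∈ A
    · obtain ⟨A', rfl⟩ := Multiset.exists_cons_of_mem ha
      obtain ⟨t, ht, rfl⟩ := ih A' ((Multiset.cons_le_cons_iff _).1 hA)
      exact ⟨a ::ₘ t, Multiset.cons_le_cons a ht, by simp⟩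
    · obtain ⟨t, ht, rfl⟩ := ih A ((Multiset.le_cons_of_notMem ha).1 hA)
      exact ⟨t, ht.trans (Multiset.le_cons_self s a), rfl⟩

theorem majorizes_iff_multiset_majorizes {I K : Type*} [Fintype I] [Fintype K]
    (y : I → ℝ) (x : K → ℝ) :
    Majorizes y x ↔ (Finset.univ.val.map y).Majorizes (Finset.univ.val.map x) := by
  refine and_congr ⟨fun H A hA => ?_, fun H A => ?_⟩ Iff.rfl
  · obtain ⟨t, ht, rfl⟩ := Multiset.exists_le_map_eq x _ A hA
    obtain ⟨B, hB, hAB⟩ := H ⟨t, Multiset.nodup_of_le ht Finset.univ.nodup⟩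
    refine ⟨B.val.map y, Multiset.map_le_map (Finset.val_le_iff.2 B.subset_univ), ?_, hAB⟩
    simpa using hB
  · obtain ⟨B, hB, hc, hs⟩ :=
      H (A.val.map x) (Multiset.map_le_map (Finset.val_le_iff.2 A.subset_univ))
    obtain ⟨t, ht, rfl⟩ := Multiset.exists_le_map_eq y _ B hB
    exact ⟨⟨t, Multiset.nodup_of_le ht Finset.univ.nodup⟩, by simpa using hc, hs⟩

theorem Multiset.majorizes_zero_cons_iff {Y X : Multiset ℝ} (hY : ∀ y ∈ Y, 0 ≤ y)
    (hc : X.card = Y.card) : (0 ::ₘ Y).Majorizes (0 ::ₘ X) ↔ Y.Majorizes X := by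
  refine and_congr ⟨fun H A hA => ?_, fun H A hA => ?_⟩ (by simp)
  · obtain ⟨B, hB, hBA, hs⟩ := H A (hA.trans (Multiset.le_cons_self _ _))
    by_cases h0 : (0 : ℝ) ∈ B
    · obtain ⟨B', rfl⟩ := Multiset.exists_cons_of_mem h0
      rw [Multiset.cons_le_cons_iff] at hB
      obtain ⟨C, rfl⟩ := Multiset.le_iff_exists_add.1 hB
      have hAX := Multiset.card_le_card hA
      have hC : 0 < C.card := by
        simp only [Multiset.card_cons, Multiset.card_add] at hBA hc
        omega
      obtain ⟨y, hy⟩ := Multiset.card_pos_iff_exists_mem.1 hC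
      obtain ⟨C', rfl⟩ := Multiset.exists_cons_of_mem hy
      have hy0 := hY y (by simp)
      refine ⟨y ::ₘ B', ?_, by simpa using hBA, ?_⟩
      · rw [Multiset.add_cons, Multiset.cons_le_cons_iff]
        exact Multiset.le_add_right _ _
      · simp only [Multiset.sum_cons] at hs ⊢
        linarith
    · exact ⟨B, (Multiset.le_cons_of_notMem h0).1 hB, hBA, hs⟩
  · by_cases h0 : (0 : ℝ) ∈ A
    · obtain ⟨A', rfl⟩ := Multiset.exists_cons_of_mem h0
      obtain ⟨B, hB, hBA, hs⟩ := H A' ((Multiset.cons_le_cons_iff _).1 hA)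
      exact ⟨0 ::ₘ B, Multiset.cons_le_cons 0 hB, by simpa using hBA, by simpa using hs⟩
    · obtain ⟨B, hB, hBA, hs⟩ := H A ((Multiset.le_cons_of_notMem h0).1 hA)
      exact ⟨B, hB.trans (Multiset.le_cons_self _ _), hBA, hs⟩

theorem Multiset.sum_map_const_sub (c : ℝ) (X : Multiset ℝ) :
    (X.map (c - ·)).sum = X.card * c - X.sum := by
  rw [Multiset.sum_map_sub]
  simp

theorem Multiset.map_const_sub_map_const_sub (c : ℝ) (X : Multiset ℝ) :
    (X.map (c - ·)).map (c - ·) = X := by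
  simp

theorem Multiset.Majorizes.map_const_sub {Y X : Multiset ℝ} (H : Y.Majorizes X)
    (hc : X.card = Y.card) (c : ℝ) : (Y.map (c - ·)).Majorizes (X.map (c - ·)) := by
  refine ⟨fun A hA => ?_, by rw [sum_map_const_sub, sum_map_const_sub, hc, H.2]⟩
  obtain ⟨S, hS, rfl⟩ := Multiset.exists_le_map_eq _ _ A hA
  obtain ⟨T, rfl⟩ := Multiset.le_iff_exists_add.1 hS
  obtain ⟨U, hU, hUT, hs⟩ := H.1 T (Multiset.le_add_left _ _)
  obtain ⟨V, rfl⟩ := Multiset.le_iff_exists_add.1 hU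
  have hsum := H.2
  simp only [Multiset.card_add, Multiset.sum_add] at hc hsum
  have hVS : V.card = S.card := by omega
  refine ⟨V.map (c - ·), Multiset.map_le_map (Multiset.le_add_left _ _), by simpa using hVS, ?_⟩
  rw [sum_map_const_sub, sum_map_const_sub, hVS]
  linarith

theorem Multiset.majorizes_map_const_sub_iff {Y X : Multiset ℝ} (hc : X.card = Y.card) (c : ℝ) :
    (Y.map (c - ·)).Majorizes (X.map (c - ·)) ↔ Y.Majorizes X := by
  refine ⟨fun H => ?_, fun H => H.map_const_sub hc c⟩
  simpa only [map_const_sub_map_const_sub] using H.map_const_sub (by simpa using hc) c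

theorem Multiset.exists_eq_zero_cons_of_zero_cons_map_const_sub {c : ℝ} (hc : c ≠ 0)
    {M M' : Multiset ℝ} (h : 0 ::ₘ M.map (c - ·) = c ::ₘ M') :
    ∃ N, M = 0 ::ₘ N ∧ M' = 0 ::ₘ N.map (c - ·) := by
  have h0 : (0 : ℝ) ∈ M' := by
    have : (0 : ℝ) ∈ c ::ₘ M' := h ▸ Multiset.mem_cons_self _ _
    exact (Multiset.mem_cons.1 this).resolve_left hc.symm
  obtain ⟨N, rfl⟩ := Multiset.exists_cons_of_mem h0
  rw [Multiset.cons_swap, Multiset.cons_inj_right] at h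
  refine ⟨N.map (c - ·), ?_, by rw [map_const_sub_map_const_sub]⟩
  rw [← map_const_sub_map_const_sub c M, h]
  simp

namespace SimpleGraph

theorem lapMatrix_add_lapMatrix_compl {V : Type*} [Fintype V] [DecidableEq V]
    (G : SimpleGraph V) [DecidableRel G.Adj] [DecidableRel Gᶜ.Adj] :
    G.lapMatrix ℝ + Gᶜ.lapMatrix ℝ + Matrix.vecMulVec 1 1 =
      Matrix.scalar V (Fintype.card V : ℝ) := by
  ext i j
  rcases eq_or_ne i j with rfl | hij
  · have hd := G.degree_compl i
    have hlt := G.degree_lt_card_verts i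
    have hd' : G.degree i + Gᶜ.degree i + 1 = Fintype.card V := by omega
    simp [lapMatrix, degMatrix, ← hd']
  · by_cases h : G.Adj i j <;>
      simp [lapMatrix, degMatrix, Matrix.scalar_apply, -map_natCast, hij, h]

open scoped Matrix in
theorem eval_charpoly_lapMatrix_mul_eval_charpoly {V : Type*} [Fintype V] [DecidableEq V]
    (G : SimpleGraph V) [DecidableRel G.Adj] (t : ℝ) :
    (G.lapMatrix ℝ).charpoly.eval t * (Matrix.vecMulVec (1 : V → ℝ) (1 : V → ℝ)).charpoly.eval t =
      t ^ Fintype.card V * (G.lapMatrix ℝ + Matrix.vecMulVec 1 1).charpoly.eval t := by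
  have hJ : G.lapMatrix ℝ * Matrix.vecMulVec (1 : V → ℝ) (1 : V → ℝ) = 0 := by
    rw [Matrix.mul_vecMulVec]
    have : G.lapMatrix ℝ *ᵥ (1 : V → ℝ) = 0 := G.lapMatrix_mulVec_const_eq_zero
    rw [this, Matrix.zero_vecMulVec]
  simp only [Matrix.eval_charpoly]
  rw [← Matrix.det_mul, ← Matrix.det_smul]
  congr 1
  simp only [Matrix.scalar_apply, ← Matrix.smul_one_eq_diagonal, sub_mul, mul_sub, hJ, smul_sub,
    smul_add, smul_mul_assoc, mul_smul_comm, one_mul, mul_one]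
  abel

open Polynomial in
open scoped Matrix in
theorem zero_cons_map_eigenvalues {V : Type*} [Fintype V] [DecidableEq V] [Nonempty V]
    (G : SimpleGraph V) [DecidableRel G.Adj] [DecidableRel Gᶜ.Adj]
    (h : (G.lapMatrix ℝ).IsHermitian) (hc : (Gᶜ.lapMatrix ℝ).IsHermitian) :
    0 ::ₘ (Finset.univ.val.map h.eigenvalues).map ((Fintype.card V : ℝ) - ·) =
      (Fintype.card V : ℝ) ::ₘ Finset.univ.val.map hc.eigenvalues := by
  set c : ℝ := (Fintype.card V : ℝ)
  have heval : ∀ {A : Matrix V V ℝ} (hA : A.IsHermitian) (t : ℝ),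
      (Matrix.scalar V t - A).det = ∏ i, (t - hA.eigenvalues i) := fun hA t => by
    rw [← Matrix.eval_charpoly, hA.charpoly_eq, eval_prod]
    simp
  have hpoly : X * ∏ i, (X - C (c - h.eigenvalues i)) =
      (X - C c) * ∏ i, (X - C (hc.eigenvalues i)) := by
    refine mul_left_cancel₀ (pow_ne_zero (Fintype.card V) X_ne_zero) (Polynomial.funext fun t => ?_)
    have key := Gᶜ.eval_charpoly_lapMatrix_mul_eval_charpoly t
    have hsum : Gᶜ.lapMatrix ℝ + Matrix.vecMulVec 1 1 = Matrix.scalar V c - G.lapMatrix ℝ := by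
      rw [← G.lapMatrix_add_lapMatrix_compl]
      abel
    have hneg : Matrix.scalar V t - (Matrix.scalar V c - G.lapMatrix ℝ) =
        -(Matrix.scalar V (c - t) - G.lapMatrix ℝ) := by
      rw [map_sub]
      abel
    rw [hsum, Matrix.charpoly_vecMulVec, Matrix.eval_charpoly, Matrix.eval_charpoly, heval hc,
      hneg, Matrix.det_neg, heval h] at key
    have hpow : t ^ Fintype.card V = t * t ^ (Fintype.card V - 1) := by
      rw [← pow_succ', Nat.sub_add_cancel Fintype.card_pos]
    have hprod : (-1) ^ Fintype.card V * ∏ i, (c - t - h.eigenvalues i) =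
        ∏ i, (t - (c - h.eigenvalues i)) := by
      rw [← Finset.card_univ, ← Finset.prod_const, ← Finset.prod_mul_distrib]
      exact Finset.prod_congr rfl fun i _ => by ring
    have hone : (1 : V → ℝ) ⬝ᵥ 1 = c := by simp [c]
    rw [hprod, hone] at key
    simp only [eval_sub, eval_smul, eval_pow, eval_X, smul_eq_mul] at key
    simp only [eval_mul, eval_pow, eval_X, eval_prod, eval_sub, eval_C]
    rw [hpow] at key ⊢
    linear_combination (-t) * key
  have hroots := congrArg roots hpoly
  have hne : ∀ f : V → ℝ, ∏ i, (X - C (f i)) ≠ 0 := fun f =>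
    (monic_prod_of_monic _ _ fun i _ => monic_X_sub_C _).ne_zero
  have hr : ∀ f : V → ℝ, (∏ i, (X - C (f i))).roots = Finset.univ.val.map f := fun f => by
    rw [← roots_multiset_prod_X_sub_C (Finset.univ.val.map f), Multiset.map_map]
    rfl
  rw [roots_mul (mul_ne_zero X_ne_zero (hne _)), roots_mul (mul_ne_zero (X_sub_C_ne_zero _) (hne _)),
    hr, hr, roots_X, roots_X_sub_C] at hroots
  simpa only [Multiset.singleton_add, Multiset.map_map, Function.comp_def] using hroots

/-- The conjugate of the degree sequence, as a function on `Fin n`. -/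
abbrev conjDegree {n : ℕ} (G : SimpleGraph (Fin n)) [DecidableRel G.Adj] (i : Fin n) : ℝ :=
  ((Finset.univ.filter fun v => (i : ℕ) + 1 ≤ G.degree v).card : ℝ)

theorem conjDegree_last {m : ℕ} (G : SimpleGraph (Fin (m + 1))) [DecidableRel G.Adj] :
    G.conjDegree (Fin.last m) = 0 := by
  have : ∀ v, ¬ m + 1 ≤ G.degree v := fun v => by
    have := G.degree_lt_card_verts v
    simp only [Fintype.card_fin] at this
    omega
  simp [conjDegree, this]

theorem conjDegree_compl_castSucc {m : ℕ} (G : SimpleGraph (Fin (m + 1))) [DecidableRel G.Adj]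
    [DecidableRel Gᶜ.Adj] (i : Fin m) :
    Gᶜ.conjDegree i.castSucc = ((m + 1 : ℕ) : ℝ) - G.conjDegree i.rev.castSucc := by
  have hsplit := Finset.card_filter_add_card_filter_not (s := (Finset.univ : Finset (Fin (m + 1))))
    (fun v => (i.castSucc : ℕ) + 1 ≤ Gᶜ.degree v)
  have hcongr : (Finset.univ.filter fun v => ¬ (i.castSucc : ℕ) + 1 ≤ Gᶜ.degree v) =
      Finset.univ.filter fun v => (i.rev.castSucc : ℕ) + 1 ≤ G.degree v := by
    refine Finset.filter_congr fun v _ => ?_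
    have hd := G.degree_compl v
    have hlt := G.degree_lt_card_verts v
    have hi := i.isLt
    simp only [Fintype.card_fin] at hd hlt
    simp only [Fin.val_castSucc, Fin.val_rev]
    omega
  rw [hcongr, Finset.card_univ, Fintype.card_fin] at hsplit
  rw [conjDegree, conjDegree, eq_sub_iff_add_eq]
  exact_mod_cast hsplit

theorem map_conjDegree_eq_zero_cons {m : ℕ} (G : SimpleGraph (Fin (m + 1))) [DecidableRel G.Adj] :
    Finset.univ.val.map G.conjDegree =
      0 ::ₘ Finset.univ.val.map fun i : Fin m => G.conjDegree i.castSucc := by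
  rw [Fin.univ_castSuccEmb, Finset.cons_val, Multiset.map_cons, conjDegree_last, Finset.map_val,
    Multiset.map_map]
  rfl

theorem map_conjDegree_compl_castSucc {m : ℕ} (G : SimpleGraph (Fin (m + 1)))
    [DecidableRel G.Adj] [DecidableRel Gᶜ.Adj] :
    (Finset.univ.val.map fun i : Fin m => Gᶜ.conjDegree i.castSucc) =
      (Finset.univ.val.map fun i : Fin m => G.conjDegree i.castSucc).map
        (((m + 1 : ℕ) : ℝ) - ·) := by
  simp only [conjDegree_compl_castSucc]
  conv_rhs => rw [← Multiset.map_univ_val_equiv (Fin.revPerm (n := m))]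
  simp only [Multiset.map_map, Function.comp_def, Fin.revPerm_apply]

end SimpleGraph

theorem groneMerris_iff_complement {n : ℕ} (G : SimpleGraph (Fin n))
    [DecidableRel G.Adj] [DecidableRel Gᶜ.Adj]
    (h : (G.lapMatrix ℝ).IsHermitian) (hc : (Gᶜ.lapMatrix ℝ).IsHermitian) :
    Majorizes
        (fun i : Fin n => ((Finset.univ.filter fun v => (i : ℕ) + 1 ≤ G.degree v).card : ℝ))
        h.eigenvalues ↔
      Majorizes
        (fun i : Fin n => ((Finset.univ.filter fun v => (i : ℕ) + 1 ≤ Gᶜ.degree v).card : ℝ))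
        hc.eigenvalues := by
  change Majorizes G.conjDegree _ ↔ Majorizes Gᶜ.conjDegree _
  rw [majorizes_iff_multiset_majorizes, majorizes_iff_multiset_majorizes]
  cases n with
  | zero => simp [Multiset.Majorizes]
  | succ m =>
    have hspec := G.zero_cons_map_eigenvalues h hc
    rw [Fintype.card_fin] at hspec
    obtain ⟨N, hN, hN'⟩ := Multiset.exists_eq_zero_cons_of_zero_cons_map_const_sub
      (Nat.cast_ne_zero.2 m.succ_ne_zero) hspec
    have hcard : N.card = m := by simpa using (congrArg Multiset.card hN).symm
    rw [hN, hN', G.map_conjDegree_eq_zero_cons, Gᶜ.map_conjDegree_eq_zero_cons,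
      Multiset.majorizes_zero_cons_iff (by simp) (by simp [hcard]),
      Multiset.majorizes_zero_cons_iff (by simp) (by simp [hcard]),
      G.map_conjDegree_compl_castSucc, Multiset.majorizes_map_const_sub_iff (by simp [hcard])]
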